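/- Let c_r = (r! / (r·(3r−1)·2^r·(−log(1−2^{−r}))))^{1/r}. For every integer r ≥ 2 and every real ε > 0 there exists n₀ such that for all integers n ≥ n₀ and all integers d with 1 ≤ d ≤ n/(log n)^{3r²}, every (r+1)-graph H on n vertices with maximum r-degree at most d satisfies α(H) ≥ (1−ε)·c_r·((n/d)·log(n/d))^{1/r}. -/

import Mathlib

open Finset
open scoped Classical

/-- `Z` is an independent set of the hypergraph `H`: it contains no edge. -/
def IsIndep {V : Type*} [DecidableEq V] (H : Finset (Finset V)) (Z : Finset V) : Prop :=
  ∀ e ∈ H, ¬ e ⊆ Z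

/-- The independence number of a hypergraph on a finite vertex type. -/
noncomputable def indepNum {V : Type*} [Fintype V] [DecidableEq V]
    (H : Finset (Finset V)) : ℕ :=
  ((Finset.univ : Finset V).powerset.filter (fun Z => IsIndep H Z)).sup Finset.card

/-- `H` has maximum `r`-degree at most `d`: every `r`-element vertex set is
contained in at most `d` edges. -/
def maxDegLe {V : Type*} [DecidableEq V] (r : ℕ) (H : Finset (Finset V)) (d : ℕ) : Prop :=
  ∀ S : Finset V, S.card = r → (H.filter (fun e => S ⊆ e)).card ≤ d

/-!
Let `v` be a random vertex, `W` a random set of `m` vertices other than `v`, and `Z` a uniformly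
random independent subset of `W`. The link of `v` consists of the sets `e \ {v}` for the edges
`e ∋ v`. For `m` slightly below `(n / d) ^ (3 / (3 r - 1))`, with high probability the link edges
inside `W` are disjoint and no edge inside `W` meets their union in two vertices. Given the part of
`Z` outside this union, the rest of `Z` is then a uniformly random set of those vertices of the
union that are still free, so if `k` link edges consist of free vertices, `Z` contains none of them
with probability `(1 - 2⁻ʳ) ^ k`, and `2⁻ʳ k` of them on average. Bounding the exponential from
below by a tangent line makes this a linear relation between the two quantities, which can be
averaged over `v` and `W`.

If `Z` contains no link edge then `v` can be added to it, so this happens with probability at most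
`2 α / (m + 1)`; and `Z` contains at most `d (α choose r) / (n - m)` link edges on average, by the
degree condition. With the tangent at `exp (-t)`, where `t` is slightly below
`log (n / d) / (r (3 r - 1))`, the former is negligible even after multiplication by `exp t` when
`α` is below the claimed bound, and then the latter is too small. The exponent `3 / (3 r - 1)`, and
with it `c_r`, comes from the pairs of link edges that are joined by an edge inside `W`.
-/

open Filter Topology
open scoped BigOperators

section Decoupling

variable {V : Type*} [DecidableEq V] {F H L : Finset (Finset V)} {A B S W Y Z : Finset V}

/-- The edges of the hypergraph `H` that lie inside the vertex set `W`. -/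
def edgesWithin (H : Finset (Finset V)) (W : Finset V) : Finset (Finset V) := {e ∈ H | e ⊆ W}

/-- The independent sets of `H` that lie inside the vertex set `W`. -/
noncomputable def indepSets (H : Finset (Finset V)) (W : Finset V) : Finset (Finset V) :=
  {Z ∈ W.powerset | IsIndep H Z}

@[simp]
lemma mem_edgesWithin {e : Finset V} : e ∈ edgesWithin H W ↔ e ∈ H ∧ e ⊆ W := mem_filter

@[simp]
lemma mem_indepSets : Z ∈ indepSets H W ↔ Z ⊆ W ∧ IsIndep H Z := by simp [indepSets]

lemma isIndep_iff_edgesWithin_eq_empty : IsIndep H Z ↔ edgesWithin H Z = ∅ := by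
  simp [IsIndep, edgesWithin, filter_eq_empty_iff]

lemma IsIndep.mono (hZ : IsIndep H Z) (hYZ : Y ⊆ Z) : IsIndep H Y :=
  fun e he heY => hZ e he (heY.trans hYZ)

lemma indepSets_nonempty (hH : ∅ ∉ H) (W : Finset V) : (indepSets H W).Nonempty :=
  ⟨∅, mem_indepSets.2 ⟨empty_subset W, fun _ he he' => hH (subset_empty.1 he' ▸ he)⟩⟩

lemma IsIndep.card_le_indepNum [Fintype V] (hZ : IsIndep H Z) : #Z ≤ indepNum H :=
  le_sup (f := card) (by simpa using hZ)

lemma expect_powerset_ite_subset (h : S ⊆ A) :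
    𝔼 B ∈ A.powerset, (if S ⊆ B then (1 : ℝ) else 0) = 1 / 2 ^ #S := by
  have hIcc : {B ∈ A.powerset | S ⊆ B} = Icc S A := by
    ext B
    simp [and_comm]
  rw [expect_eq_sum_div_card, sum_boole, hIcc, card_Icc_finset h, card_powerset, Nat.cast_pow,
    Nat.cast_pow, Nat.cast_ofNat, pow_sub₀ _ two_ne_zero (card_le_card h)]
  field_simp

lemma ite_isIndep_eq_prod (F : Finset (Finset V)) (B : Finset V) :
    (if IsIndep F B then (1 : ℝ) else 0) = ∏ S ∈ F, (1 + -(if S ⊆ B then (1 : ℝ) else 0)) := by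
  have hfactor (S : Finset V) :
      1 + -(if S ⊆ B then (1 : ℝ) else 0) = if ¬ S ⊆ B then 1 else 0 := by
    split_ifs <;> simp_all
  simp only [hfactor, prod_boole]
  exact if_congr Iff.rfl rfl rfl

lemma expect_powerset_prod_ite_subset (hF : ∀ S ∈ F, S ⊆ A)
    (hdisj : (F : Set (Finset V)).PairwiseDisjoint id) :
    𝔼 B ∈ A.powerset, ∏ S ∈ F, (if S ⊆ B then (1 : ℝ) else 0) = ∏ S ∈ F, 1 / 2 ^ #S := by
  have hunion (B : Finset V) : (∀ S ∈ F, S ⊆ B) ↔ F.biUnion id ⊆ B := biUnion_subset.symm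
  simp only [prod_boole, hunion]
  rw [expect_powerset_ite_subset ((hunion A).1 hF), card_biUnion hdisj, prod_div_distrib,
    prod_const_one, prod_pow_eq_pow_sum]
  rfl

lemma expect_powerset_ite_isIndep (hF : ∀ S ∈ F, S ⊆ A)
    (hdisj : (F : Set (Finset V)).PairwiseDisjoint id) :
    𝔼 B ∈ A.powerset, (if IsIndep F B then (1 : ℝ) else 0) = ∏ S ∈ F, (1 - 1 / 2 ^ #S) := by
  simp only [ite_isIndep_eq_prod, sub_eq_add_neg, prod_one_add, expect_sum_comm]
  refine sum_congr rfl fun T hT => ?_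
  have hTF := mem_powerset.1 hT
  simp only [prod_neg, ← mul_expect]
  rw [expect_powerset_prod_ite_subset (fun S hS => hF S (hTF hS)) (hdisj.subset hTF)]

lemma expect_powerset_card_edgesWithin {r : ℕ} (hF : ∀ S ∈ F, S ⊆ A)
    (hr : (F : Set (Finset V)).Sized r) :
    𝔼 B ∈ A.powerset, (#(edgesWithin F B) : ℝ) = #F / 2 ^ r := by
  simp only [edgesWithin, card_filter, Nat.cast_sum, Nat.cast_ite, Nat.cast_one, Nat.cast_zero,
    expect_sum_comm]
  rw [sum_congr rfl fun S hS => by rw [expect_powerset_ite_subset (hF S hS), hr hS], sum_const,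
    nsmul_eq_mul, mul_one_div]

/-- The rate `-log (1 - 2⁻ʳ)`: a uniformly random subset of the union of `k` disjoint `r`-sets
contains none of them with probability `exp (-k * vacancyRate r)`. -/
noncomputable def vacancyRate (r : ℕ) : ℝ := -Real.log (1 - 1 / 2 ^ r)

lemma exp_neg_vacancyRate {r : ℕ} (hr : r ≠ 0) :
    Real.exp (-vacancyRate r) = 1 - 1 / 2 ^ r := by
  rw [vacancyRate, neg_neg, Real.exp_log]
  exact sub_pos.2 ((div_lt_one (by positivity)).2 (one_lt_pow₀ one_lt_two hr))

lemma vacancyRate_pos {r : ℕ} (hr : r ≠ 0) : 0 < vacancyRate r := by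
  rw [← neg_neg_iff_pos, ← Real.exp_lt_one_iff, exp_neg_vacancyRate hr]
  exact sub_lt_self 1 (by positivity)

lemma exp_neg_mul_one_add_sub_le (t y : ℝ) :
    Real.exp (-t) * (1 + t - y) ≤ Real.exp (-y) := by
  calc Real.exp (-t) * (1 + t - y) ≤ Real.exp (-t) * Real.exp (t - y) := by
        gcongr
        linarith [Real.add_one_le_exp (t - y)]
    _ = Real.exp (-y) := by rw [← Real.exp_add]; ring_nf

lemma exp_neg_mul_le_expect_powerset_ite_isIndep {r : ℕ} (hr : r ≠ 0) (hF : ∀ S ∈ F, S ⊆ A)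
    (hFr : (F : Set (Finset V)).Sized r) (hdisj : (F : Set (Finset V)).PairwiseDisjoint id)
    (t : ℝ) :
    Real.exp (-t) *
        (1 + t - vacancyRate r * 2 ^ r * 𝔼 B ∈ A.powerset, (#(edgesWithin F B) : ℝ)) ≤
      𝔼 B ∈ A.powerset, (if IsIndep F B then (1 : ℝ) else 0) := by
  have hvacant : 𝔼 B ∈ A.powerset, (if IsIndep F B then (1 : ℝ) else 0) =
      Real.exp (-(vacancyRate r * #F)) := by
    rw [expect_powerset_ite_isIndep hF hdisj, prod_congr rfl fun S hS => by rw [hFr hS],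
      prod_const, ← exp_neg_vacancyRate hr, ← Real.exp_nat_mul]
    ring_nf
  rw [hvacant, expect_powerset_card_edgesWithin hF hFr, mul_assoc,
    mul_div_cancel₀ _ (by positivity)]
  exact exp_neg_mul_one_add_sub_le t _

/-- The vertices covered by the edges of `L` that lie inside `W`. -/
def edgeSupport (L : Finset (Finset V)) (W : Finset V) : Finset V := (edgesWithin L W).biUnion id

/-- Inside `W`, the edges of `L` are pairwise disjoint and every edge of `H` meets the set they
cover in at most one vertex. With `L` the link of a vertex, this makes the restriction of a random
independent set of `H` to that set uniform, conditionally on the rest of the independent set. -/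
structure Decoupled (L H : Finset (Finset V)) (W : Finset V) : Prop where
  pairwiseDisjoint : (edgesWithin L W : Set (Finset V)).PairwiseDisjoint id
  card_inter_le_one : ∀ e ∈ edgesWithin H W, #(e ∩ edgeSupport L W) ≤ 1

/-- The vertices of `N` that can be added one at a time to the independent set `Y` of `H`. -/
noncomputable def freeVertices (H : Finset (Finset V)) (N Y : Finset V) : Finset V :=
  {u ∈ N | IsIndep H (insert u Y)}

lemma edgeSupport_subset (L : Finset (Finset V)) (W : Finset V) : edgeSupport L W ⊆ W :=
  biUnion_subset.2 fun _ hS => (mem_edgesWithin.1 hS).2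

lemma Decoupled.isIndep_union_iff (hdec : Decoupled L H W) (hY : Y ∈ indepSets H W)
    (hB : B ⊆ edgeSupport L W) :
    IsIndep H (Y ∪ B) ↔ B ⊆ freeVertices H (edgeSupport L W) Y := by
  obtain ⟨hYW, hYH⟩ := mem_indepSets.1 hY
  constructor
  · exact fun hYB u hu => mem_filter.2 ⟨hB hu, hYB.mono <| insert_subset
      (mem_union_right Y hu) subset_union_left⟩
  · intro hfree e he heYB
    have hone := hdec.card_inter_le_one e
      (mem_edgesWithin.2 ⟨he, heYB.trans (union_subset hYW (hB.trans (edgeSupport_subset L W)))⟩)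
    obtain ⟨u, hue, huY⟩ := not_subset.1 (hYH e he)
    have huB : u ∈ B := (mem_union.1 (heYB hue)).resolve_left huY
    refine (mem_filter.1 (hfree huB)).2 e he fun w hwe => mem_insert.2 ?_
    refine (mem_union.1 (heYB hwe)).symm.imp_left fun hwB => ?_
    exact card_le_one.1 hone w (mem_inter.2 ⟨hwe, hB hwB⟩) u (mem_inter.2 ⟨hue, hB huB⟩)

lemma edgesWithin_union_of_disjoint (hYW : Y ⊆ W) (hY : Disjoint Y (edgeSupport L W))
    (hA : A ⊆ edgeSupport L W) (hB : B ⊆ A) :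
    edgesWithin L (Y ∪ B) = edgesWithin (edgesWithin L A) B := by
  ext S
  simp only [mem_edgesWithin]
  constructor
  · rintro ⟨hSL, hS⟩
    have hSW : S ⊆ W := hS.trans
      (union_subset hYW ((hB.trans hA).trans (edgeSupport_subset L W)))
    have hSsupport : S ⊆ edgeSupport L W :=
      subset_biUnion_of_mem id (mem_edgesWithin.2 ⟨hSL, hSW⟩)
    have hSB : S ⊆ B := (hY.symm.mono_left hSsupport).left_le_of_le_sup_left hS
    exact ⟨⟨hSL, hSB.trans hB⟩, hSB⟩
  · exact fun ⟨⟨hSL, _⟩, hSB⟩ => ⟨hSL, hSB.trans subset_union_right⟩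

lemma Decoupled.sum_fiber (hdec : Decoupled L H W) (hY : Y ∈ indepSets H W)
    (hYdisj : Disjoint Y (edgeSupport L W)) (g : Finset V → ℝ) :
    ∑ Z ∈ indepSets H W with Z \ edgeSupport L W = Y, g Z =
      ∑ B ∈ (freeVertices H (edgeSupport L W) Y).powerset, g (Y ∪ B) := by
  set N := edgeSupport L W
  have hfreeN : freeVertices H N Y ⊆ N := filter_subset _ _
  symm
  refine sum_nbij' (Y ∪ ·) (· ∩ N) (fun B hB => ?_) (fun Z hZ => ?_) (fun B hB => ?_)
    (fun Z hZ => ?_) fun _ _ => rfl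
  · have hB := mem_powerset.1 hB
    have hBN := hB.trans hfreeN
    refine mem_filter.2 ⟨mem_indepSets.2 ⟨union_subset (mem_indepSets.1 hY).1
      (hBN.trans (edgeSupport_subset L W)), (hdec.isIndep_union_iff hY hBN).2 hB⟩, ?_⟩
    rw [union_sdiff_distrib, sdiff_eq_self_of_disjoint hYdisj, sdiff_eq_empty_iff_subset.2 hBN,
      union_empty]
  · obtain ⟨hZW, hZY⟩ := mem_filter.1 hZ
    refine mem_powerset.2 ((hdec.isIndep_union_iff hY inter_subset_right).1 ?_)
    rw [← hZY, sdiff_union_inter]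
    exact (mem_indepSets.1 hZW).2
  · rw [union_inter_distrib_right, disjoint_iff_inter_eq_empty.1 hYdisj, empty_union,
      inter_eq_left.2 ((mem_powerset.1 hB).trans hfreeN)]
  · rw [← (mem_filter.1 hZ).2, sdiff_union_inter]

lemma Decoupled.exp_neg_mul_sum_fiber_le {r : ℕ} (hdec : Decoupled L H W) (hr : r ≠ 0)
    (hL : (L : Set (Finset V)).Sized r) (hY : Y ∈ indepSets H W)
    (hYdisj : Disjoint Y (edgeSupport L W)) (t : ℝ) :
    ∑ Z ∈ indepSets H W with Z \ edgeSupport L W = Y,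
        Real.exp (-t) * (1 + t - vacancyRate r * 2 ^ r * #(edgesWithin L Z)) ≤
      ∑ Z ∈ indepSets H W with Z \ edgeSupport L W = Y, (if IsIndep L Z then (1 : ℝ) else 0) := by
  rw [hdec.sum_fiber hY hYdisj, hdec.sum_fiber hY hYdisj]
  set A := freeVertices H (edgeSupport L W) Y
  have hA : A ⊆ edgeSupport L W := filter_subset _ _
  have hAW : A ⊆ W := hA.trans (edgeSupport_subset L W)
  have hlink : ∀ B ∈ A.powerset, edgesWithin L (Y ∪ B) = edgesWithin (edgesWithin L A) B :=
    fun B hB => edgesWithin_union_of_disjoint (mem_indepSets.1 hY).1 hYdisj hA (mem_powerset.1 hB)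
  have hsubset : edgesWithin L A ⊆ edgesWithin L W := fun S hS =>
    mem_edgesWithin.2 ⟨(mem_edgesWithin.1 hS).1, (mem_edgesWithin.1 hS).2.trans hAW⟩
  have hrandom := exp_neg_mul_le_expect_powerset_ite_isIndep (F := edgesWithin L A) (A := A) hr
    (fun S hS => (mem_edgesWithin.1 hS).2) (fun S hS => hL (mem_edgesWithin.1 hS).1)
    (hdec.pairwiseDisjoint.subset hsubset) t
  have hne : A.powerset.Nonempty := powerset_nonempty A
  simp only [isIndep_iff_edgesWithin_eq_empty] at hrandom ⊢
  rw [sum_congr rfl fun B hB => by rw [hlink B hB], ← card_mul_expect,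
    sum_congr (g := fun B => if edgesWithin (edgesWithin L A) B = ∅ then (1 : ℝ) else 0) rfl
      fun B hB => by rw [hlink B hB], ← card_mul_expect, ← mul_expect, expect_sub_distrib,
    expect_const hne, ← mul_expect]
  gcongr

lemma Decoupled.exp_neg_mul_expect_le {r : ℕ} (hdec : Decoupled L H W) (hr : r ≠ 0)
    (hL : (L : Set (Finset V)).Sized r) (hH : ∅ ∉ H) (t : ℝ) :
    Real.exp (-t) *
        (1 + t - vacancyRate r * 2 ^ r * 𝔼 Z ∈ indepSets H W, (#(edgesWithin L Z) : ℝ)) ≤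
      𝔼 Z ∈ indepSets H W, (if IsIndep L Z then (1 : ℝ) else 0) := by
  set N := edgeSupport L W
  have hmaps : ∀ Z ∈ indepSets H W, Z \ N ∈ {Y ∈ indepSets H W | Disjoint Y N} := fun Z hZ =>
    mem_filter.2 ⟨mem_indepSets.2 ⟨sdiff_subset.trans (mem_indepSets.1 hZ).1,
      (mem_indepSets.1 hZ).2.mono sdiff_subset⟩, sdiff_disjoint⟩
  have hsum : ∑ Z ∈ indepSets H W,
        Real.exp (-t) * (1 + t - vacancyRate r * 2 ^ r * #(edgesWithin L Z)) ≤
      ∑ Z ∈ indepSets H W, (if IsIndep L Z then (1 : ℝ) else 0) := by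
    rw [← sum_fiberwise_of_maps_to hmaps, ← sum_fiberwise_of_maps_to hmaps]
    refine sum_le_sum fun Y hY => ?_
    obtain ⟨hYH, hYdisj⟩ := mem_filter.1 hY
    exact hdec.exp_neg_mul_sum_fiber_le hr hL hYH hYdisj t
  calc _ = 𝔼 Z ∈ indepSets H W,
        Real.exp (-t) * (1 + t - vacancyRate r * 2 ^ r * #(edgesWithin L Z)) := by
        rw [← mul_expect, expect_sub_distrib, expect_const (indepSets_nonempty hH W),
          ← mul_expect]
    _ ≤ _ := by
        simp only [expect_eq_sum_div_card]
        gcongr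

end Decoupling

section LocalBounds

variable {V : Type*} [DecidableEq V] {H : Finset (Finset V)} {S U W Z : Finset V} {r d : ℕ} {v : V}

lemma isIndep_insert_iff :
    IsIndep H (insert v Z) ↔ IsIndep H Z ∧ IsIndep (H.memberSubfamily v) Z := by
  constructor
  · refine fun h => ⟨h.mono (subset_insert v Z), fun S hS hSZ => ?_⟩
    exact h _ (mem_memberSubfamily.1 hS).1 (insert_subset_insert v hSZ)
  · rintro ⟨hZ, hlink⟩ e he heZ
    by_cases hve : v ∈ e
    · refine hlink (e.erase v) (mem_memberSubfamily.2 ⟨?_, notMem_erase v e⟩)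
        (subset_insert_iff.1 heZ)
      rwa [insert_erase hve]
    · exact hZ e he ((subset_insert_iff_of_notMem hve).1 heZ)

lemma memberSubfamily_indepSets (hv : v ∈ U) :
    (indepSets H U).memberSubfamily v =
      {Z ∈ indepSets H (U.erase v) | IsIndep (H.memberSubfamily v) Z} := by
  ext Z
  by_cases hvZ : v ∈ Z
  · simp [mem_memberSubfamily, hvZ, subset_erase]
  · simp [mem_memberSubfamily, hvZ, subset_erase, insert_subset_iff, hv, isIndep_insert_iff,
      and_assoc]

lemma nonMemberSubfamily_indepSets :
    (indepSets H U).nonMemberSubfamily v = indepSets H (U.erase v) := by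
  ext Z
  simp only [mem_nonMemberSubfamily, mem_indepSets, subset_erase]
  tauto

lemma expect_ite_isIndep_link_le (hH : ∅ ∉ H) (hv : v ∈ U) :
    𝔼 Z ∈ indepSets H (U.erase v), (if IsIndep (H.memberSubfamily v) Z then (1 : ℝ) else 0) ≤
      2 * 𝔼 Z ∈ indepSets H U, (if v ∈ Z then (1 : ℝ) else 0) := by
  have hsplit := card_memberSubfamily_add_card_nonMemberSubfamily v (indepSets H U)
  have hfilter := card_filter_add_card_filter_not (s := indepSets H U) (v ∈ ·)
  rw [show #{Z ∈ indepSets H U | v ∉ Z} = #((indepSets H U).nonMemberSubfamily v) from rfl]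
    at hfilter
  have hmember : #{Z ∈ indepSets H U | v ∈ Z} = #((indepSets H U).memberSubfamily v) := by omega
  rw [expect_eq_sum_div_card, expect_eq_sum_div_card, sum_boole, sum_boole, hmember, ← hsplit,
    nonMemberSubfamily_indepSets, memberSubfamily_indepSets hv]
  have hle := card_filter_le (indepSets H (U.erase v)) (IsIndep (H.memberSubfamily v))
  have hpos : 0 < #(indepSets H (U.erase v)) := card_pos.2 (indepSets_nonempty hH _)
  rw [← mul_div_assoc, div_le_div_iff₀ (by positivity) (by positivity)]
  norm_cast
  nlinarith

lemma expect_expect_ite_isIndep_link_le [Fintype V] (hH : ∅ ∉ H) (U : Finset V) :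
    𝔼 v ∈ U, 𝔼 Z ∈ indepSets H (U.erase v),
        (if IsIndep (H.memberSubfamily v) Z then (1 : ℝ) else 0) ≤
      2 * indepNum H / #U := by
  calc _ ≤ 𝔼 v ∈ U, 2 * 𝔼 Z ∈ indepSets H U, (if v ∈ Z then (1 : ℝ) else 0) :=
        expect_le_expect fun v hv => expect_ite_isIndep_link_le hH hv
    _ = 𝔼 Z ∈ indepSets H U, 2 * (#(U ∩ Z) / #U : ℝ) := by
        rw [← mul_expect, expect_comm, mul_expect]
        simp only [expect_eq_sum_div_card (s := U), sum_boole, filter_mem_eq_inter]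
    _ ≤ 2 * indepNum H / #U := by
        refine expect_le (indepSets_nonempty hH U) fun Z hZ => ?_
        rw [← mul_div_assoc]
        gcongr
        exact (card_le_card inter_subset_right).trans (mem_indepSets.1 hZ).2.card_le_indepNum

lemma sized_memberSubfamily (hH : (H : Set (Finset V)).Sized (r + 1)) (v : V) :
    (H.memberSubfamily v : Set (Finset V)).Sized r := fun S hS => by
  obtain ⟨hSH, hvS⟩ := mem_memberSubfamily.1 hS
  have hcard := hH hSH
  rw [card_insert_of_notMem hvS] at hcard
  omega

lemma card_filter_mem_memberSubfamily_le (s : Finset V) (hd : maxDegLe r H d) (hS : #S = r) :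
    #{v ∈ s | S ∈ H.memberSubfamily v} ≤ d := by
  refine (card_le_card_of_injOn (insert · S) (fun v hv => ?_) fun v hv w _ hvw => ?_).trans
    (hd S hS)
  · exact mem_filter.2 ⟨(mem_memberSubfamily.1 (mem_filter.1 hv).2).1, subset_insert v S⟩
  · exact (insert_inj (mem_memberSubfamily.1 (mem_filter.1 hv).2).2).1 hvw

lemma sum_card_edgesWithin_link_le (hH : (H : Set (Finset V)).Sized (r + 1))
    (hd : maxDegLe r H d) (s Z : Finset V) :
    ∑ v ∈ s, #(edgesWithin (H.memberSubfamily v) Z) ≤ (#Z).choose r * d := by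
  have hlink (v : V) : edgesWithin (H.memberSubfamily v) Z =
      (powersetCard r Z).bipartiteAbove (fun v S => S ∈ H.memberSubfamily v) v := by
    ext S
    simp only [mem_edgesWithin, mem_bipartiteAbove, mem_powersetCard]
    exact ⟨fun ⟨hS, hSZ⟩ => ⟨⟨hSZ, sized_memberSubfamily hH v hS⟩, hS⟩,
      fun ⟨⟨hSZ, _⟩, hS⟩ => ⟨hS, hSZ⟩⟩
  simp only [hlink]
  rw [sum_card_bipartiteAbove_eq_sum_card_bipartiteBelow, ← card_powersetCard]
  exact sum_le_card_nsmul _ _ _ fun S hS =>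
    card_filter_mem_memberSubfamily_le s hd (mem_powersetCard.1 hS).2

lemma expect_expect_card_edgesWithin_link_le [Fintype V] (hH : (H : Set (Finset V)).Sized (r + 1))
    (hd : maxDegLe r H d) (s W : Finset V) :
    𝔼 v ∈ s, 𝔼 Z ∈ indepSets H W, (#(edgesWithin (H.memberSubfamily v) Z) : ℝ) ≤
      (indepNum H).choose r * d / #s := by
  have hempty : ∅ ∉ H := fun h => by simpa using hH h
  rw [expect_comm]
  refine expect_le (indepSets_nonempty hempty W) fun Z hZ => ?_
  rw [expect_eq_sum_div_card]
  gcongr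
  have hchoose := Nat.choose_le_choose r (mem_indepSets.1 hZ).2.card_le_indepNum
  exact_mod_cast (sum_card_edgesWithin_link_le hH hd s Z).trans (Nat.mul_le_mul_right d hchoose)

end LocalBounds

section DoubleCounting

lemma expect_expect_eq_sum_sum_div {ι κ : Type*} {s : Finset ι} {t : ι → Finset κ} {k : ℕ}
    (hk : ∀ i ∈ s, #(t i) = k) (f : ι → κ → ℝ) :
    𝔼 i ∈ s, 𝔼 j ∈ t i, f i j = (∑ i ∈ s, ∑ j ∈ t i, f i j) / (#s * k : ℕ) := by
  have hinner : ∀ i ∈ s, 𝔼 j ∈ t i, f i j = (∑ j ∈ t i, f i j) / k := fun i hi => by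
    rw [expect_eq_sum_div_card, hk i hi]
  rw [expect_congr rfl hinner, ← expect_div, expect_eq_sum_div_card, div_div, Nat.cast_mul]

lemma expect_comm_of_biregular {ι κ : Type*} {s : Finset ι} {t : ι → Finset κ} {s' : Finset κ}
    {t' : κ → Finset ι} {k l : ℕ} (hk : ∀ i ∈ s, #(t i) = k) (hl : ∀ j ∈ s', #(t' j) = l)
    (h : ∀ i j, i ∈ s ∧ j ∈ t i ↔ i ∈ t' j ∧ j ∈ s') (f : ι → κ → ℝ) :
    𝔼 i ∈ s, 𝔼 j ∈ t i, f i j = 𝔼 j ∈ s', 𝔼 i ∈ t' j, f i j := by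
  have hcard : #s * k = #s' * l := by
    rw [← sum_const_nat hk, ← sum_const_nat hl]
    simp only [card_eq_sum_ones]
    exact sum_comm' h
  rw [expect_expect_eq_sum_sum_div hk, expect_expect_eq_sum_sum_div hl (fun j i => f i j),
    sum_comm' h, hcard]

variable {V : Type*} [Fintype V] [DecidableEq V]

lemma expect_powersetCard_erase_eq_expect_compl (m : ℕ) (f : V → Finset V → ℝ) :
    𝔼 v, 𝔼 W ∈ powersetCard m (univ.erase v), f v W =
      𝔼 W ∈ powersetCard m univ, 𝔼 v ∈ Wᶜ, f v W := by
  refine expect_comm_of_biregular (k := (Fintype.card V - 1).choose m)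
    (l := Fintype.card V - m) (fun v _ => ?_) (fun W hW => ?_) (fun v W => ?_) f
  · rw [card_powersetCard, card_erase_of_mem (mem_univ v), card_univ]
  · rw [card_compl, (mem_powersetCard.1 hW).2]
  · simp [mem_powersetCard, subset_erase]

lemma mem_image_insert_powersetCard_erase {m : ℕ} {v : V} {U : Finset V} :
    U ∈ (powersetCard m (univ.erase v)).image (insert v) ↔ v ∈ U ∧ #U = m + 1 := by
  simp only [mem_image, mem_powersetCard, subset_erase, subset_univ, true_and]
  constructor
  · rintro ⟨W, ⟨hvW, rfl⟩, rfl⟩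
    exact ⟨mem_insert_self v W, card_insert_of_notMem hvW⟩
  · rintro ⟨hvU, hU⟩
    exact ⟨U.erase v, ⟨notMem_erase v U, by rw [card_erase_of_mem hvU, hU, Nat.add_sub_cancel]⟩,
      insert_erase hvU⟩

lemma expect_powersetCard_erase_eq_expect_erase (m : ℕ) (f : V → Finset V → ℝ) :
    𝔼 v, 𝔼 W ∈ powersetCard m (univ.erase v), f v W =
      𝔼 U ∈ powersetCard (m + 1) univ, 𝔼 v ∈ U, f v (U.erase v) := by
  have hnotMem {v : V} {W : Finset V} (hW : W ∈ powersetCard m (univ.erase v)) : v ∉ W :=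
    (subset_erase.1 (mem_powersetCard.1 hW).1).2
  have hinj (v : V) :
      Set.InjOn (insert v) (powersetCard m (univ.erase v) : Set (Finset V)) := by
    intro W hW W' hW' h
    rw [← erase_insert (hnotMem hW), h, erase_insert (hnotMem hW')]
  have hreindex (v : V) : 𝔼 W ∈ powersetCard m (univ.erase v), f v W =
      𝔼 U ∈ (powersetCard m (univ.erase v)).image (insert v), f v (U.erase v) := by
    rw [expect_eq_sum_div_card, expect_eq_sum_div_card, sum_image (hinj v),
      card_image_of_injOn (hinj v)]
    congr 1
    exact sum_congr rfl fun W hW => by rw [erase_insert (hnotMem hW)]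
  simp only [hreindex]
  refine expect_comm_of_biregular (k := (Fintype.card V - 1).choose m)
    (l := m + 1) (fun v _ => ?_) (fun U hU => (mem_powersetCard.1 hU).2) (fun v U => ?_) _
  · rw [card_image_of_injOn (hinj v), card_powersetCard, card_erase_of_mem (mem_univ v), card_univ]
  · simp only [mem_univ, true_and, mem_image_insert_powersetCard_erase, mem_powersetCard,
      subset_univ]

end DoubleCounting

section SupersetCounts

lemma descFactorial_mul_pow_le {m a : ℕ} (h : m ≤ a) (k : ℕ) :
    m.descFactorial k * a ^ k ≤ a.descFactorial k * m ^ k := by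
  induction k with
  | zero => simp
  | succ k ih =>
    have hfactor : (m - k) * a ≤ (a - k) * m := by
      rw [Nat.sub_mul, Nat.sub_mul, mul_comm a m]
      exact Nat.sub_le_sub_left (Nat.mul_le_mul_left k h) _
    calc m.descFactorial (k + 1) * a ^ (k + 1)
        = ((m - k) * a) * (m.descFactorial k * a ^ k) := by rw [Nat.descFactorial_succ]; ring
      _ ≤ ((a - k) * m) * (a.descFactorial k * m ^ k) := Nat.mul_le_mul hfactor ih
      _ = a.descFactorial (k + 1) * m ^ (k + 1) := by rw [Nat.descFactorial_succ]; ring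

variable {V : Type*} [DecidableEq V]

lemma card_filter_powersetCard_superset_mul_le {A U : Finset V} {m : ℕ} (hU : U ⊆ A)
    (hm : m ≤ #A) :
    #{W ∈ powersetCard m A | U ⊆ W} * #A ^ #U ≤ (#A).choose m * m ^ #U := by
  rcases lt_or_ge m #U with hlt | hle
  · have hnone : {W ∈ powersetCard m A | U ⊆ W} = ∅ := filter_eq_empty_iff.2 fun W hW hUW =>
      (card_le_card hUW).not_gt ((mem_powersetCard.1 hW).2.trans_lt hlt)
    simp [hnone]
  · rw [card_filter_powersetCard_subset U A m hU hle]
    refine le_of_mul_le_mul_left ?_ (Nat.descFactorial_pos.2 (card_le_card hU))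
    calc (#A).descFactorial #U * ((#A - #U).choose (m - #U) * #A ^ #U)
        = (#U).factorial * ((#A).choose #U * (#A - #U).choose (m - #U)) * #A ^ #U := by
          rw [Nat.descFactorial_eq_factorial_mul_choose]
          ring
      _ = (#A).choose m * (m.descFactorial #U * #A ^ #U) := by
          rw [← Nat.choose_mul hle, Nat.descFactorial_eq_factorial_mul_choose m]
          ring
      _ ≤ (#A).choose m * ((#A).descFactorial #U * m ^ #U) :=
          Nat.mul_le_mul_left _ (descFactorial_mul_pow_le hm _)
      _ = (#A).descFactorial #U * ((#A).choose m * m ^ #U) := by ring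

lemma expect_powersetCard_ite_subset_le {A U : Finset V} {m : ℕ} (hU : U ⊆ A) (hm : m ≤ #A) :
    𝔼 W ∈ powersetCard m A, (if U ⊆ W then (1 : ℝ) else 0) ≤ (m / #A) ^ #U := by
  rcases A.eq_empty_or_nonempty with rfl | hA
  · obtain rfl := subset_empty.1 hU
    obtain rfl : m = 0 := by simpa using hm
    simp
  · rw [expect_eq_sum_div_card, sum_boole, card_powersetCard, div_pow,
      div_le_div_iff₀ (mod_cast Nat.choose_pos hm) (by have := hA.card_pos; positivity)]
    exact_mod_cast (card_filter_powersetCard_superset_mul_le hU hm).trans_eq (mul_comm _ _)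

lemma expect_powersetCard_erase_ite_subset_le [Fintype V] {U : Finset V} {v : V} {m : ℕ}
    (hv : v ∉ U) (hm : m < Fintype.card V) :
    𝔼 W ∈ powersetCard m (univ.erase v), (if U ⊆ W then (1 : ℝ) else 0) ≤
      ((m + 1) / Fintype.card V) ^ #U := by
  have hcard : #(univ.erase v) = Fintype.card V - 1 := by
    rw [card_erase_of_mem (mem_univ v), card_univ]
  refine (expect_powersetCard_ite_subset_le (subset_erase.2 ⟨subset_univ U, hv⟩)
    (hcard ▸ Nat.le_pred_of_lt hm)).trans ?_
  rw [hcard, Nat.cast_pred (Nat.zero_lt_of_lt hm)]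
  have hm' : (m : ℝ) + 1 ≤ Fintype.card V := mod_cast hm
  have hratio : (m : ℝ) / (Fintype.card V - 1) ≤ (m + 1) / Fintype.card V := by
    rcases m.eq_zero_or_pos with rfl | hpos
    · rw [Nat.cast_zero, zero_div]
      positivity
    · have hpos' : (0 : ℝ) < m := mod_cast hpos
      rw [div_le_div_iff₀ (by linarith) (by linarith)]
      nlinarith
  exact pow_le_pow_left₀ (div_nonneg m.cast_nonneg (by linarith [m.cast_nonneg (α := ℝ)])) hratio _

variable [Fintype V] {H : Finset (Finset V)} {I : Finset V} {r d : ℕ}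

lemma card_filter_superset_le (hH : (H : Set (Finset V)).Sized (r + 1)) (hd : maxDegLe r H d)
    (hI : #I ≤ r) : #{e ∈ H | I ⊆ e} ≤ Fintype.card V ^ (r - #I) * d := by
  have hcover : {e ∈ H | I ⊆ e} ⊆
      {R ∈ powersetCard (r - #I) (univ : Finset V) | #(I ∪ R) = r}.biUnion
        fun R : Finset V => {e ∈ H | I ∪ R ⊆ e} := by
    intro e he
    obtain ⟨heH, hIe⟩ := mem_filter.1 he
    obtain ⟨S, hIS, hSe, hS⟩ := exists_subsuperset_card_eq hIe hI (by rw [hH heH]; omega)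
    refine mem_biUnion.2 ⟨S \ I, mem_filter.2 ⟨mem_powersetCard.2 ⟨subset_univ (S \ I), ?_⟩, ?_⟩,
      mem_filter.2 ⟨heH, ?_⟩⟩
    · rw [card_sdiff_of_subset hIS, hS]
    · rw [union_sdiff_of_subset hIS, hS]
    · rwa [union_sdiff_of_subset hIS]
  refine (card_le_card hcover).trans ((card_biUnion_le_card_mul _ _ d fun R hR =>
    hd _ (mem_filter.1 hR).2).trans (Nat.mul_le_mul_right d ((card_filter_le _ _).trans ?_)))
  rw [card_powersetCard, card_univ]
  exact Nat.choose_le_pow _ _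

end SupersetCounts

section Obstructions

variable {V : Type*} [DecidableEq V] {H : Finset (Finset V)} {S W e : Finset V} {r : ℕ} {v : V}

/-- The pairs `(f, e)` of distinct edges sharing at least two vertices such that `f` contains `v`:
the first kind of configuration that couples the edges through `v`. -/
def overlappingPairs (H : Finset (Finset V)) (v : V) : Finset (Finset V × Finset V) :=
  {p ∈ H ×ˢ H | v ∈ p.1 ∧ p.1 ≠ p.2 ∧ 2 ≤ #(p.2 ∩ p.1)}

/-- The triples `(f, g, e)` of edges such that `f` and `g` contain `v`, the edge `e` joins a vertex
of `f` to a different vertex of `g`, and the three edges cover `3 * r - 1` vertices besides `v`: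
the second kind of configuration that couples the edges through `v`. -/
def joinedTriples (H : Finset (Finset V)) (r : ℕ) (v : V) :
    Finset (Finset V × Finset V × Finset V) :=
  {p ∈ H ×ˢ H ×ˢ H | (v ∈ p.1 ∧ v ∈ p.2.1) ∧
    (∃ x ∈ p.1, ∃ y ∈ p.2.1, x ≠ y ∧ {x, y} ⊆ p.2.2) ∧
    #((p.1 ∪ p.2.1 ∪ p.2.2).erase v) = 3 * r - 1}

lemma mem_edgesWithin_memberSubfamily :
    S ∈ edgesWithin (H.memberSubfamily v) W ↔ insert v S ∈ H ∧ v ∉ S ∧ S ⊆ W := by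
  rw [mem_edgesWithin, mem_memberSubfamily, and_assoc]

lemma card_inter_le_one_of_forall_overlappingPairs
    (hpairs : ∀ p ∈ overlappingPairs H v, ¬ (p.1 ∪ p.2).erase v ⊆ W)
    (hS : S ∈ edgesWithin (H.memberSubfamily v) W) (he : e ∈ H) (heW : e.erase v ⊆ W)
    (hne : insert v S ≠ e) : #(e ∩ insert v S) ≤ 1 := by
  obtain ⟨hSH, hvS, hSW⟩ := mem_edgesWithin_memberSubfamily.1 hS
  by_contra! hcard
  refine hpairs (insert v S, e) (mem_filter.2 ⟨mem_product.2 ⟨hSH, he⟩, mem_insert_self v S, hne,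
    hcard⟩) ?_
  rw [erase_union_distrib, erase_insert hvS]
  exact union_subset hSW heW

lemma pairwiseDisjoint_of_forall_overlappingPairs
    (hpairs : ∀ p ∈ overlappingPairs H v, ¬ (p.1 ∪ p.2).erase v ⊆ W) :
    (edgesWithin (H.memberSubfamily v) W : Set (Finset V)).PairwiseDisjoint id := by
  intro S hS T hT hST
  obtain ⟨hTH, hvT, hTW⟩ := mem_edgesWithin_memberSubfamily.1 hT
  obtain ⟨-, hvS, -⟩ := mem_edgesWithin_memberSubfamily.1 hS
  have hne : insert v S ≠ insert v T := fun h => hST <| by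
    rw [← erase_insert hvS, h, erase_insert hvT]
  have hcard := card_inter_le_one_of_forall_overlappingPairs hpairs hS hTH
    (by rwa [erase_insert hvT]) hne
  refine disjoint_left.2 fun x hxS hxT => hvS ?_
  rwa [card_le_one.1 hcard v (mem_inter.2 ⟨mem_insert_self v T, mem_insert_self v S⟩) x
    (mem_inter.2 ⟨mem_insert_of_mem hxT, mem_insert_of_mem hxS⟩)]

lemma card_union_union_of_card_inter_eq_one {T : Finset V} (hS : #S = r) (hT : #T = r)
    (he : #e = r + 1) (hST : Disjoint S T) (heS : #(e ∩ S) = 1) (heT : #(e ∩ T) = 1) :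
    #(S ∪ T ∪ e) = 3 * r - 1 := by
  have hunion := card_union_add_card_inter (S ∪ T) e
  have hinter : #((S ∪ T) ∩ e) = 2 := by
    rw [inter_comm, inter_union_distrib_left, card_union_of_disjoint
      (hST.mono inter_subset_right inter_subset_right), heS, heT]
  rw [card_union_of_disjoint hST] at hunion
  omega

lemma exists_joinedTriples_of_one_lt_card_inter (hH : (H : Set (Finset V)).Sized (r + 1))
    (hvW : v ∉ W) (hpairs : ∀ p ∈ overlappingPairs H v, ¬ (p.1 ∪ p.2).erase v ⊆ W)
    (he : e ∈ edgesWithin H W) (hcard : 1 < #(e ∩ edgeSupport (H.memberSubfamily v) W)) :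
    ∃ p ∈ joinedTriples H r v, (p.1 ∪ p.2.1 ∪ p.2.2).erase v ⊆ W := by
  obtain ⟨heH, heW⟩ := mem_edgesWithin.1 he
  have hve : v ∉ e := fun h => hvW (heW h)
  have hinter {S : Finset V} (hS : S ∈ edgesWithin (H.memberSubfamily v) W) : #(e ∩ S) ≤ 1 :=
    (card_le_card (inter_subset_inter_left (subset_insert v S))).trans <|
      card_inter_le_one_of_forall_overlappingPairs hpairs hS heH
        ((erase_subset v e).trans heW) fun h => hve (h ▸ mem_insert_self v S)
  obtain ⟨x, hx, y, hy, hxy⟩ := one_lt_card.1 hcard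
  obtain ⟨hxe, hx⟩ := mem_inter.1 hx
  obtain ⟨hye, hy⟩ := mem_inter.1 hy
  obtain ⟨S, hS, hxS⟩ := mem_biUnion.1 hx
  obtain ⟨T, hT, hyT⟩ := mem_biUnion.1 hy
  have hxS' : x ∈ e ∩ S := mem_inter.2 ⟨hxe, hxS⟩
  have hyT' : y ∈ e ∩ T := mem_inter.2 ⟨hye, hyT⟩
  have hST : S ≠ T := by
    rintro rfl
    exact hxy (card_le_one.1 (hinter hS) x hxS' y hyT')
  obtain ⟨hSH, hvS, hSW⟩ := mem_edgesWithin_memberSubfamily.1 hS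
  obtain ⟨hTH, hvT, hTW⟩ := mem_edgesWithin_memberSubfamily.1 hT
  have herase : (insert v S ∪ insert v T ∪ e).erase v = S ∪ T ∪ e := by
    rw [erase_union_distrib, erase_union_distrib, erase_insert hvS, erase_insert hvT,
      erase_eq_of_notMem hve]
  refine ⟨(insert v S, insert v T, e), mem_filter.2 ⟨by simp [hSH, hTH, heH], by simp,
    ⟨x, mem_insert_of_mem hxS, y, mem_insert_of_mem hyT, hxy, by simp [insert_subset_iff, *]⟩,
    ?_⟩, ?_⟩
  · rw [herase]
    exact card_union_union_of_card_inter_eq_one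
      (sized_memberSubfamily hH v (mem_edgesWithin.1 hS).1)
      (sized_memberSubfamily hH v (mem_edgesWithin.1 hT).1) (hH heH)
      (pairwiseDisjoint_of_forall_overlappingPairs hpairs hS hT hST)
      ((hinter hS).antisymm (card_pos.2 ⟨x, hxS'⟩)) ((hinter hT).antisymm (card_pos.2 ⟨y, hyT'⟩))
  · rw [herase]
    exact union_subset (union_subset hSW hTW) heW

lemma exists_obstruction_of_not_decoupled (hH : (H : Set (Finset V)).Sized (r + 1))
    (hvW : v ∉ W) (hdec : ¬ Decoupled (H.memberSubfamily v) H W) :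
    (∃ p ∈ overlappingPairs H v, (p.1 ∪ p.2).erase v ⊆ W) ∨
      ∃ p ∈ joinedTriples H r v, (p.1 ∪ p.2.1 ∪ p.2.2).erase v ⊆ W := by
  by_contra! hnone
  refine hdec ⟨pairwiseDisjoint_of_forall_overlappingPairs hnone.1, fun e he => ?_⟩
  by_contra! hcard
  obtain ⟨p, hp, hpW⟩ := exists_joinedTriples_of_one_lt_card_inter hH hvW hnone.1 he hcard
  exact hnone.2 p hp hpW

lemma card_erase_union (hH : (H : Set (Finset V)).Sized (r + 1)) {p : Finset V × Finset V}
    (hp : p ∈ overlappingPairs H v) :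
    #((p.1 ∪ p.2).erase v) = 2 * r + 1 - #(p.2 ∩ p.1) := by
  obtain ⟨hpH, hv, -, -⟩ := mem_filter.1 hp
  obtain ⟨hf, he⟩ := mem_product.1 hpH
  have hunion := card_union_add_card_inter p.1 p.2
  rw [hH hf, hH he] at hunion
  rw [card_erase_of_mem (mem_union_left _ hv), inter_comm]
  omega

lemma card_inter_le_of_ne {f : Finset V} (hH : (H : Set (Finset V)).Sized (r + 1)) (he : e ∈ H)
    (hf : f ∈ H) (hne : f ≠ e) : #(e ∩ f) ≤ r := by
  by_contra! hlt
  have heI := eq_of_subset_of_card_le (inter_subset_left : e ∩ f ⊆ e) (by rw [hH he]; omega)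
  have hfI := eq_of_subset_of_card_le (inter_subset_right : e ∩ f ⊆ f) (by rw [hH hf]; omega)
  exact hne (hfI.symm.trans heI)

end Obstructions

section ObstructionProbability

variable {V : Type*} [Fintype V] [DecidableEq V] {H : Finset (Finset V)} {f g : Finset V}
  {r d : ℕ} {v : V}

lemma card_filter_mem_le (hH : (H : Set (Finset V)).Sized (r + 1)) (hd : maxDegLe r H d)
    (hr : r ≠ 0) (v : V) : #{f ∈ H | v ∈ f} ≤ Fintype.card V ^ (r - 1) * d := by
  simpa using card_filter_superset_le hH hd (I := {v})
    ((card_singleton v).trans_le (Nat.one_le_iff_ne_zero.2 hr))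

lemma pow_mul_div_pow_le {M n : ℝ} {i : ℕ} (hM : 1 ≤ M) (hn : 0 < n) (hi : 2 ≤ i) (hir : i ≤ r) :
    n ^ (r - i) * (M / n) ^ (2 * r + 1 - i) ≤ M ^ (2 * r - 1) / n ^ (r + 1) := by
  have hsplit : n ^ (2 * r + 1 - i) = n ^ (r - i) * n ^ (r + 1) := by
    rw [← pow_add]
    congr 1
    omega
  rw [div_pow, hsplit, ← mul_div_assoc, mul_div_mul_left _ _ (by positivity)]
  exact div_le_div_of_nonneg_right (pow_le_pow_right₀ hM (by omega)) (by positivity)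

lemma sum_pow_card_inter_le (hH : (H : Set (Finset V)).Sized (r + 1)) (hd : maxDegLe r H d)
    (hf : f ∈ H) {M : ℝ} (hM : 1 ≤ M) (hV : 0 < Fintype.card V) :
    ∑ e ∈ H with f ≠ e ∧ 2 ≤ #(e ∩ f), (M / Fintype.card V) ^ (2 * r + 1 - #(e ∩ f)) ≤
      2 ^ (r + 1) * (d * M ^ (2 * r - 1) / Fintype.card V ^ (r + 1)) := by
  set q := M / Fintype.card V
  have hmaps : ∀ e ∈ ({e ∈ H | f ≠ e ∧ 2 ≤ #(e ∩ f)}),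
      e ∩ f ∈ {I ∈ f.powerset | 2 ≤ #I ∧ #I ≤ r} := fun e he => by
    obtain ⟨heH, hne, htwo⟩ := mem_filter.1 he
    exact mem_filter.2 ⟨mem_powerset.2 inter_subset_right, htwo, card_inter_le_of_ne hH heH hf hne⟩
  have hfiber : ∀ I ∈ {I ∈ f.powerset | 2 ≤ #I ∧ #I ≤ r},
      ∑ e ∈ ({e ∈ H | f ≠ e ∧ 2 ≤ #(e ∩ f)}) with e ∩ f = I, q ^ (2 * r + 1 - #(e ∩ f)) ≤
        d * M ^ (2 * r - 1) / Fintype.card V ^ (r + 1) := fun I hI => by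
    obtain ⟨-, htwo, hIr⟩ := mem_filter.1 hI
    have hcard : #{e ∈ ({e ∈ H | f ≠ e ∧ 2 ≤ #(e ∩ f)}) | e ∩ f = I} ≤
        Fintype.card V ^ (r - #I) * d := by
      refine (card_le_card fun e he => ?_).trans (card_filter_superset_le hH hd hIr)
      obtain ⟨heF, rfl⟩ := mem_filter.1 he
      exact mem_filter.2 ⟨(mem_filter.1 heF).1, inter_subset_left⟩
    rw [sum_congr rfl fun e he => by rw [(mem_filter.1 he).2], sum_const, nsmul_eq_mul]
    calc _ ≤ (Fintype.card V ^ (r - #I) * d : ℝ) * q ^ (2 * r + 1 - #I) := by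
          gcongr
          exact_mod_cast hcard
      _ = d * (Fintype.card V ^ (r - #I) * q ^ (2 * r + 1 - #I)) := by ring
      _ ≤ _ := by
          rw [mul_div_assoc]
          gcongr
          exact pow_mul_div_pow_le hM (mod_cast hV) htwo hIr
  rw [← sum_fiberwise_of_maps_to hmaps]
  refine (sum_le_card_nsmul _ _ _ hfiber).trans ?_
  rw [nsmul_eq_mul]
  gcongr
  have hcard := card_filter_le f.powerset fun I => 2 ≤ #I ∧ #I ≤ r
  rw [card_powerset, hH hf] at hcard
  exact_mod_cast hcard

lemma sum_overlappingPairs_le (hH : (H : Set (Finset V)).Sized (r + 1)) (hd : maxDegLe r H d)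
    (hr : r ≠ 0) {M : ℝ} (hM : 1 ≤ M) (v : V) :
    ∑ p ∈ overlappingPairs H v, (M / Fintype.card V) ^ #((p.1 ∪ p.2).erase v) ≤
      2 ^ (r + 1) * M ^ (2 * r - 1) * (d / Fintype.card V) ^ 2 := by
  have hV : 0 < Fintype.card V := Fintype.card_pos_iff.2 ⟨v⟩
  have hV' : (Fintype.card V : ℝ) ≠ 0 := by positivity
  calc _ = ∑ p ∈ overlappingPairs H v, (M / Fintype.card V) ^ (2 * r + 1 - #(p.2 ∩ p.1)) :=
        sum_congr rfl fun p hp => by rw [card_erase_union hH hp]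
    _ = ∑ f ∈ H with v ∈ f, ∑ e ∈ H with f ≠ e ∧ 2 ≤ #(e ∩ f),
          (M / Fintype.card V) ^ (2 * r + 1 - #(e ∩ f)) := by
        refine sum_finset_product _ _ _ fun p => ?_
        simp only [overlappingPairs, mem_filter, mem_product]
        tauto
    _ ≤ (Fintype.card V ^ (r - 1) * d : ℕ) •
          (2 ^ (r + 1) * (d * M ^ (2 * r - 1) / Fintype.card V ^ (r + 1))) := by
        refine (sum_le_card_nsmul _ _ _ fun f hf =>
          sum_pow_card_inter_le hH hd (mem_filter.1 hf).1 hM hV).trans ?_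
        gcongr
        exact card_filter_mem_le hH hd hr v
    _ = _ := by
        obtain ⟨k, rfl⟩ := Nat.exists_eq_add_one_of_ne_zero hr
        rw [nsmul_eq_mul, Nat.add_sub_cancel]
        push_cast
        field_simp
        ring

lemma card_filter_joining_le (hH : (H : Set (Finset V)).Sized (r + 1)) (hd : maxDegLe r H d)
    (hr : 2 ≤ r) (hf : f ∈ H) (hg : g ∈ H) :
    #{e ∈ H | ∃ x ∈ f, ∃ y ∈ g, x ≠ y ∧ {x, y} ⊆ e} ≤
      (r + 1) ^ 2 * (Fintype.card V ^ (r - 2) * d) := by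
  have hcover : {e ∈ H | ∃ x ∈ f, ∃ y ∈ g, x ≠ y ∧ {x, y} ⊆ e} ⊆
      {p ∈ f ×ˢ g | p.1 ≠ p.2}.biUnion fun p => {e ∈ H | {p.1, p.2} ⊆ e} := by
    intro e he
    obtain ⟨heH, x, hx, y, hy, hxy, hxye⟩ := mem_filter.1 he
    exact mem_biUnion.2 ⟨(x, y), mem_filter.2 ⟨mem_product.2 ⟨hx, hy⟩, hxy⟩,
      mem_filter.2 ⟨heH, hxye⟩⟩
  refine (card_le_card hcover).trans ((card_biUnion_le_card_mul _ _ _ fun p hp => ?_).trans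
    (Nat.mul_le_mul_right _ ((card_filter_le _ _).trans_eq ?_)))
  · have hpair : #{p.1, p.2} = 2 := card_pair (mem_filter.1 hp).2
    simpa only [hpair] using card_filter_superset_le hH hd (hpair.trans_le hr)
  · rw [card_product, hH hf, hH hg, sq]

lemma card_joinedTriples_le (hH : (H : Set (Finset V)).Sized (r + 1)) (hd : maxDegLe r H d)
    (hr : 2 ≤ r) (v : V) :
    #(joinedTriples H r v) ≤ (r + 1) ^ 2 * (Fintype.card V ^ (r - 2) * d) *
      ((Fintype.card V ^ (r - 1) * d) * (Fintype.card V ^ (r - 1) * d)) := by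
  have hmaps : ∀ p ∈ joinedTriples H r v,
      (p.1, p.2.1) ∈ {f ∈ H | v ∈ f} ×ˢ {f ∈ H | v ∈ f} := fun p hp => by
    simp only [joinedTriples, mem_filter, mem_product] at hp ⊢
    tauto
  refine (card_le_mul_card_image_of_maps_to hmaps _ fun q hq => ?_).trans
    (Nat.mul_le_mul_left _ ?_)
  · obtain ⟨hf, hg⟩ := mem_product.1 hq
    refine (card_le_card_of_injOn (·.2.2) (fun p hp => ?_) fun p hp p' hp' h => ?_).trans
      (card_filter_joining_le hH hd hr (mem_filter.1 hf).1 (mem_filter.1 hg).1)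
    · obtain ⟨hpJ, rfl⟩ := mem_filter.1 hp
      obtain ⟨hpH, -, hjoin, -⟩ := mem_filter.1 hpJ
      exact mem_filter.2 ⟨(mem_product.1 (mem_product.1 hpH).2).2, hjoin⟩
    · have hfg := (mem_filter.1 hp).2.trans (mem_filter.1 hp').2.symm
      obtain ⟨hfst, hsnd⟩ := Prod.ext_iff.1 hfg
      exact Prod.ext hfst (Prod.ext hsnd h)
  · rw [card_product]
    have hlink := card_filter_mem_le hH hd (Nat.ne_of_gt (Nat.zero_lt_of_lt hr)) v
    exact Nat.mul_le_mul hlink hlink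

lemma sum_joinedTriples_le (hH : (H : Set (Finset V)).Sized (r + 1)) (hd : maxDegLe r H d)
    (hr : 2 ≤ r) {M : ℝ} (hM : 0 ≤ M) (v : V) :
    ∑ p ∈ joinedTriples H r v, (M / Fintype.card V) ^ #((p.1 ∪ p.2.1 ∪ p.2.2).erase v) ≤
      (r + 1) ^ 2 * M ^ (3 * r - 1) * (d / Fintype.card V) ^ 3 := by
  have hV : (Fintype.card V : ℝ) ≠ 0 := mod_cast (Fintype.card_pos_iff.2 ⟨v⟩).ne'
  rw [sum_congr rfl fun p hp => by rw [(mem_filter.1 hp).2.2.2], sum_const, nsmul_eq_mul]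
  calc _ ≤ (((r + 1) ^ 2 * (Fintype.card V ^ (r - 2) * d) *
          ((Fintype.card V ^ (r - 1) * d) * (Fintype.card V ^ (r - 1) * d)) : ℕ) : ℝ) *
          (M / Fintype.card V) ^ (3 * r - 1) := by
        gcongr
        exact card_joinedTriples_le hH hd hr v
    _ = _ := by
        obtain ⟨k, rfl⟩ := Nat.exists_eq_add_of_le hr
        rw [show 2 + k - 2 = k by omega, show 2 + k - 1 = k + 1 by omega,
          show 3 * (2 + k) - 1 = 3 * k + 5 by omega]
        push_cast
        rw [div_pow]
        field_simp
        ring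

/-- The bound `2^(r+1) M^(2r-1) p² + (r+1)² M^(3r-1) p³` for the probability that the link of a
vertex fails to be decoupled in a random set of `M - 1` vertices, where `p` is the ratio of the
maximum degree to the number of vertices. -/
def obstructionBound (r : ℕ) (M p : ℝ) : ℝ :=
  2 ^ (r + 1) * M ^ (2 * r - 1) * p ^ 2 + (r + 1) ^ 2 * M ^ (3 * r - 1) * p ^ 3

lemma expect_ite_not_decoupled_le (hH : (H : Set (Finset V)).Sized (r + 1)) (hd : maxDegLe r H d)
    (hr : 2 ≤ r) {m : ℕ} (hm : m < Fintype.card V) (v : V) :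
    𝔼 W ∈ powersetCard m (univ.erase v),
        (if Decoupled (H.memberSubfamily v) H W then (0 : ℝ) else 1) ≤
      obstructionBound r (m + 1) (d / Fintype.card V) := by
  have hunion : ∀ W ∈ powersetCard m (univ.erase v),
      (if Decoupled (H.memberSubfamily v) H W then (0 : ℝ) else 1) ≤
        ∑ p ∈ overlappingPairs H v, (if (p.1 ∪ p.2).erase v ⊆ W then (1 : ℝ) else 0) +
        ∑ p ∈ joinedTriples H r v, (if (p.1 ∪ p.2.1 ∪ p.2.2).erase v ⊆ W then (1 : ℝ) else 0) := by
    intro W hW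
    rw [sum_boole, sum_boole]
    split_ifs with hdec
    · positivity
    · have hvW : v ∉ W := (subset_erase.1 (mem_powersetCard.1 hW).1).2
      norm_cast
      rcases exists_obstruction_of_not_decoupled hH hvW hdec with ⟨p, hp⟩ | ⟨p, hp⟩
      · exact le_add_right (card_pos.2 ⟨p, mem_filter.2 hp⟩)
      · exact le_add_left (card_pos.2 ⟨p, mem_filter.2 hp⟩)
  refine (expect_le_expect hunion).trans ?_
  rw [expect_add_distrib, expect_sum_comm, expect_sum_comm]
  refine add_le_add ((sum_le_sum fun p _ => ?_).trans
    (sum_overlappingPairs_le hH hd (by omega) (by simp) v)) ((sum_le_sum fun p _ => ?_).trans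
    (sum_joinedTriples_le hH hd hr (by positivity) v))
  all_goals exact expect_powersetCard_erase_ite_subset_le (notMem_erase v _) hm

end ObstructionProbability

section FiniteInequality

variable {V : Type*} [DecidableEq V] {H : Finset (Finset V)} {r d m : ℕ} {t : ℝ}

lemma exp_neg_mul_le_add_ite_not_decoupled (hH : (H : Set (Finset V)).Sized (r + 1)) (hr : r ≠ 0)
    (t : ℝ) (v : V) (W : Finset V) :
    Real.exp (-t) * (1 + t - vacancyRate r * 2 ^ r *
        𝔼 Z ∈ indepSets H W, (#(edgesWithin (H.memberSubfamily v) Z) : ℝ)) ≤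
      𝔼 Z ∈ indepSets H W, (if IsIndep (H.memberSubfamily v) Z then (1 : ℝ) else 0) +
        Real.exp (-t) * (1 + t) * (if Decoupled (H.memberSubfamily v) H W then 0 else 1) := by
  have hempty : ∅ ∉ H := fun h => by simpa using hH h
  split_ifs with hdec
  · rw [mul_zero, add_zero]
    exact hdec.exp_neg_mul_expect_le hr (sized_memberSubfamily hH v) hempty t
  · have : 0 ≤ 𝔼 Z ∈ indepSets H W, (#(edgesWithin (H.memberSubfamily v) Z) : ℝ) :=
      expect_nonneg fun _ _ => Nat.cast_nonneg _
    have hvacant : 0 ≤ 𝔼 Z ∈ indepSets H W,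
        (if IsIndep (H.memberSubfamily v) Z then (1 : ℝ) else 0) :=
      expect_nonneg fun _ _ => by positivity
    have hrate := vacancyRate_pos hr
    rw [mul_one]
    refine le_add_of_nonneg_of_le hvacant (mul_le_mul_of_nonneg_left ?_ (Real.exp_nonneg _))
    exact sub_le_self _ (by positivity)

variable [Fintype V]

lemma expect_expect_vacancy_le (hH : ∅ ∉ H) (hm : m < Fintype.card V) :
    𝔼 v, 𝔼 W ∈ powersetCard m (univ.erase v), 𝔼 Z ∈ indepSets H W,
        (if IsIndep (H.memberSubfamily v) Z then (1 : ℝ) else 0) ≤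
      2 * indepNum H / (m + 1) := by
  rw [expect_powersetCard_erase_eq_expect_erase m fun v W => 𝔼 Z ∈ indepSets H W,
    (if IsIndep (H.memberSubfamily v) Z then (1 : ℝ) else 0)]
  refine expect_le (powersetCard_nonempty.2 (by rwa [card_univ])) fun U hU => ?_
  have hbound := expect_expect_ite_isIndep_link_le hH U
  rwa [(mem_powersetCard.1 hU).2, Nat.cast_add_one] at hbound

lemma expect_expect_card_edgesWithin_le (hH : (H : Set (Finset V)).Sized (r + 1))
    (hd : maxDegLe r H d) (hm : m < Fintype.card V) :
    𝔼 v, 𝔼 W ∈ powersetCard m (univ.erase v), 𝔼 Z ∈ indepSets H W,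
        (#(edgesWithin (H.memberSubfamily v) Z) : ℝ) ≤
      (indepNum H).choose r * d / (Fintype.card V - m) := by
  rw [expect_powersetCard_erase_eq_expect_compl m fun v W => 𝔼 Z ∈ indepSets H W,
    (#(edgesWithin (H.memberSubfamily v) Z) : ℝ)]
  refine expect_le (powersetCard_nonempty.2 (by rw [card_univ]; exact hm.le)) fun W hW => ?_
  have hbound := expect_expect_card_edgesWithin_link_le hH hd Wᶜ W
  rwa [card_compl, (mem_powersetCard.1 hW).2, Nat.cast_sub hm.le] at hbound

lemma one_add_mul_one_sub_obstructionBound_le (hH : (H : Set (Finset V)).Sized (r + 1))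
    (hd : maxDegLe r H d) (hr : 2 ≤ r) (hm : m < Fintype.card V) (ht : 0 ≤ t) :
    (1 + t) * (1 - obstructionBound r (m + 1) (d / Fintype.card V)) ≤
      Real.exp t * (2 * indepNum H / (m + 1)) +
        vacancyRate r * 2 ^ r * ((indepNum H).choose r * d / (Fintype.card V - m)) := by
  have hr0 : r ≠ 0 := by omega
  have hempty : ∅ ∉ H := fun h => by simpa using hH h
  have hV : (univ : Finset V).Nonempty := univ_nonempty_iff.2
    (Fintype.card_pos_iff.1 (Nat.zero_lt_of_lt hm))
  have hW (v : V) : (powersetCard m (univ.erase v)).Nonempty := powersetCard_nonempty.2 <| by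
    rw [card_erase_of_mem (mem_univ v), card_univ]
    exact Nat.le_pred_of_lt hm
  have haverage := expect_le_expect fun v (_ : v ∈ univ) => expect_le_expect
    fun W (_ : W ∈ powersetCard m (univ.erase v)) =>
      exp_neg_mul_le_add_ite_not_decoupled hH hr0 t v W
  simp only [expect_add_distrib, expect_sub_distrib, ← mul_expect, expect_const (hW _),
    expect_const hV] at haverage
  rw [Real.exp_neg, inv_mul_le_iff₀ (Real.exp_pos t), mul_add, mul_assoc (Real.exp t)⁻¹,
    mul_inv_cancel_left₀ (Real.exp_ne_zero t)] at haverage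
  have hvacancy := mul_le_mul_of_nonneg_left (expect_expect_vacancy_le hempty hm)
    (Real.exp_nonneg t)
  have hedges := mul_le_mul_of_nonneg_left (expect_expect_card_edgesWithin_le hH hd hm)
    (mul_nonneg (vacancyRate_pos hr0).le (pow_nonneg zero_le_two r))
  have hobstruction := mul_le_mul_of_nonneg_left
    (expect_le hV fun v _ => expect_ite_not_decoupled_le hH hd hr hm v)
    (add_nonneg zero_le_one ht)
  linarith

end FiniteInequality

section Asymptotics

variable {r : ℕ} {γ ε : ℝ}

/-- The constant `c_r` of the theorem. -/
noncomputable def indepConst (r : ℕ) : ℝ :=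
  ((Nat.factorial r : ℝ) /
    ((r : ℝ) * (3 * (r : ℝ) - 1) * 2 ^ r * vacancyRate r)) ^ ((1 : ℝ) / r)

lemma three_mul_sub_one_pos (hr : r ≠ 0) : (0 : ℝ) < 3 * r - 1 := by
  have : (1 : ℝ) ≤ r := mod_cast Nat.one_le_iff_ne_zero.2 hr
  linarith

lemma indepConst_nonneg (hr : r ≠ 0) : 0 ≤ indepConst r := by
  have h3r := three_mul_sub_one_pos hr
  have hrate := vacancyRate_pos hr
  unfold indepConst
  positivity

lemma vacancyRate_mul_indepConst_pow (hr : r ≠ 0) :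
    vacancyRate r * 2 ^ r * (indepConst r ^ r / Nat.factorial r) = 1 / (r * (3 * r - 1)) := by
  have h3r := three_mul_sub_one_pos hr
  have hrate := vacancyRate_pos hr
  rw [indepConst, one_div, Real.rpow_inv_natCast_pow (by positivity) hr]
  field_simp

lemma tendsto_rpow_neg_mul_log_rpow {s : ℝ} (hs : 0 < s) (q : ℝ) :
    Tendsto (fun x : ℝ => x ^ (-s) * Real.log x ^ q) atTop (𝓝 0) := by
  refine (isLittleO_log_rpow_rpow_atTop q hs).tendsto_div_nhds_zero.congr' ?_
  filter_upwards [eventually_ge_atTop 0] with x hx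
  rw [Real.rpow_neg hx, div_eq_inv_mul]

lemma tendsto_floor_rpow_add_one_pow_mul {s k : ℕ} (hγ : 0 ≤ γ) (h : γ * s < k) :
    Tendsto (fun x : ℝ => ((⌊x ^ γ⌋₊ : ℝ) + 1) ^ s * (1 / x) ^ k) atTop (𝓝 0) := by
  have hlim : Tendsto (fun x : ℝ => 2 ^ s * x ^ (-(k - γ * s))) atTop (𝓝 0) := by
    simpa using (tendsto_rpow_neg_atTop (sub_pos.2 h)).const_mul (2 ^ s)
  refine squeeze_zero' (eventually_ge_atTop 0 |>.mono fun x hx => by positivity) ?_ hlim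
  filter_upwards [eventually_ge_atTop 1] with x hx
  have hx0 : 0 < x := by linarith
  have hfloor : (⌊x ^ γ⌋₊ : ℝ) + 1 ≤ 2 * x ^ γ := by
    linarith [Nat.floor_le (Real.rpow_nonneg hx0.le γ), Real.one_le_rpow hx hγ]
  calc ((⌊x ^ γ⌋₊ : ℝ) + 1) ^ s * (1 / x) ^ k ≤ (2 * x ^ γ) ^ s * (1 / x) ^ k := by gcongr
    _ = 2 ^ s * x ^ (-(k - γ * s)) := by
      rw [mul_pow, ← Real.rpow_mul_natCast hx0.le, one_div, inv_pow, mul_assoc, neg_sub,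
        Real.rpow_sub hx0, Real.rpow_natCast, div_eq_mul_inv]

lemma tendsto_obstructionBound_floor_rpow (hγ : 0 ≤ γ) (h₂ : γ * (2 * r - 1 : ℕ) < 2)
    (h₃ : γ * (3 * r - 1 : ℕ) < 3) :
    Tendsto (fun x : ℝ => obstructionBound r (⌊x ^ γ⌋₊ + 1) (1 / x)) atTop (𝓝 0) := by
  have hpairs := (tendsto_floor_rpow_add_one_pow_mul (k := 2) hγ h₂).const_mul (2 ^ (r + 1))
  have htriples := (tendsto_floor_rpow_add_one_pow_mul (k := 3) hγ h₃).const_mul ((r + 1 : ℝ) ^ 2)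
  simpa only [obstructionBound, mul_assoc, mul_zero, add_zero] using hpairs.add htriples

lemma tendsto_exp_mul_rpow_div_rpow {b q : ℝ} (C : ℝ) (h : b + q < γ) :
    Tendsto (fun x : ℝ => Real.exp (b * Real.log x) * (2 * (C * (x * Real.log x) ^ q) / x ^ γ))
      atTop (𝓝 0) := by
  have hlim := (tendsto_rpow_neg_mul_log_rpow (sub_pos.2 h) q).const_mul (2 * C)
  rw [mul_zero] at hlim
  refine hlim.congr' ?_
  filter_upwards [eventually_ge_atTop 1] with x hx
  have hx0 : 0 < x := by linarith
  rw [mul_comm b, ← Real.rpow_def_of_pos hx0, Real.mul_rpow hx0.le (Real.log_nonneg hx), neg_sub,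
    Real.rpow_sub hx0, Real.rpow_add hx0]
  ring

lemma vacancyRate_mul_pow_div_le (hr : r ≠ 0) (hε0 : 0 ≤ ε) (hε1 : ε ≤ 1) {N a m : ℝ} (hN : 1 ≤ N)
    (hm : m ≤ ε / 4 * N) (ha0 : 0 ≤ a)
    (ha : a ≤ (1 - ε) * indepConst r * (N * Real.log N) ^ ((1 : ℝ) / r)) :
    vacancyRate r * 2 ^ r * (a ^ r / Nat.factorial r / (N - m)) ≤
      (1 - ε) / (1 - ε / 4) * (Real.log N / (r * (3 * r - 1))) := by
  have hrate := vacancyRate_pos hr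
  have hlog := Real.log_nonneg hN
  have hNm : (1 - ε / 4) * N ≤ N - m := by linarith
  have hε4 : 0 < 1 - ε / 4 := by linarith
  have : 0 < N := by linarith
  have hapow : a ^ r ≤ (1 - ε) * (indepConst r ^ r * (N * Real.log N)) :=
    calc a ^ r ≤ ((1 - ε) * indepConst r * (N * Real.log N) ^ ((1 : ℝ) / r)) ^ r := by gcongr
      _ = (1 - ε) ^ r * (indepConst r ^ r * (N * Real.log N)) := by
        rw [mul_pow, mul_pow, one_div, Real.rpow_inv_natCast_pow (by positivity) hr, mul_assoc]
      _ ≤ (1 - ε) * (indepConst r ^ r * (N * Real.log N)) := by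
        gcongr
        · exact mul_nonneg (pow_nonneg (indepConst_nonneg hr) r) (by positivity)
        · exact pow_le_of_le_one (by linarith) (by linarith) hr
  calc _ ≤ vacancyRate r * 2 ^ r * ((1 - ε) * (indepConst r ^ r * (N * Real.log N)) /
          Nat.factorial r / ((1 - ε / 4) * N)) := by
        gcongr
        exact div_nonneg (mul_nonneg (by linarith) (mul_nonneg
          (pow_nonneg (indepConst_nonneg hr) r) (by positivity))) (by positivity)
    _ = (1 - ε) / (1 - ε / 4) * (vacancyRate r * 2 ^ r * (indepConst r ^ r / Nat.factorial r) *
          Real.log N) := by field_simp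
    _ = _ := by rw [vacancyRate_mul_indepConst_pow hr]; ring

lemma half_add_mul_lt (hε0 : 0 < ε) (hε1 : ε < 1) {y : ℝ} (hy : 0 ≤ y) :
    1 / 2 + (1 - ε) / (1 - ε / 4) * y < (1 + (1 - ε / 4) * y) * (1 - ε / 4) := by
  have hslope : (1 - ε) / (1 - ε / 4) ≤ (1 - ε / 4) * (1 - ε / 4) := by
    rw [div_le_iff₀ (by linarith)]
    nlinarith [mul_pos hε0 hε0, mul_nonneg (mul_pos hε0 hε0).le (sub_nonneg.2 hε1.le)]
  nlinarith [mul_le_mul_of_nonneg_right hslope hy]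

/-- The exponent `γ` for which `N ^ γ` random vertices are sampled, where `N = n / d`. It lies just
below `1 / r + 1 / (r (3 r - 1)) = 3 / (3 r - 1)`, the exponent at which `obstructionBound` ceases
to be small. -/
noncomputable def sampleExponent (r : ℕ) (ε : ℝ) : ℝ :=
  1 / r + (1 - ε / 8) * (1 / (r * (3 * r - 1)))

lemma sampleExponent_nonneg (hr : r ≠ 0) (hε : ε ≤ 8) : 0 ≤ sampleExponent r ε := by
  have h3r := three_mul_sub_one_pos hr
  have h8 : 0 ≤ 1 - ε / 8 := by linarith
  unfold sampleExponent
  positivity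

lemma sampleExponent_mul_lt_three (hr : r ≠ 0) (hε : 0 < ε) :
    sampleExponent r ε * (3 * r - 1) < 3 := by
  have h3r := (three_mul_sub_one_pos hr).ne'
  have hgap : sampleExponent r ε * (3 * r - 1) = 3 - ε / (8 * r) := by
    rw [sampleExponent, add_mul, mul_assoc, one_div_mul_eq_div, one_div, mul_inv, mul_assoc,
      inv_mul_cancel₀ h3r]
    field_simp
    ring
  rw [hgap]
  exact sub_lt_self _ (by positivity)

lemma eventually_floor_rpow_sampleExponent_le (hr : 2 ≤ r) (hε0 : 0 < ε) (hε8 : ε ≤ 8) {δ : ℝ}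
    (hδ : 0 < δ) :
    ∀ᶠ N : ℝ in atTop, (⌊N ^ sampleExponent r ε⌋₊ : ℝ) ≤ δ * N ∧
      obstructionBound r (⌊N ^ sampleExponent r ε⌋₊ + 1) (1 / N) ≤ δ := by
  have hr' : (2 : ℝ) ≤ r := mod_cast hr
  have hγ := sampleExponent_nonneg (r := r) (by omega) hε8
  have h₃ := sampleExponent_mul_lt_three (r := r) (by omega) hε0
  have h₂ : sampleExponent r ε * (2 * r - 1) < 2 := by nlinarith
  have h₁ : sampleExponent r ε * (1 : ℕ) < (1 : ℕ) := by
    rw [Nat.cast_one]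
    nlinarith
  filter_upwards [eventually_gt_atTop 0,
    (tendsto_floor_rpow_add_one_pow_mul hγ h₁).eventually_le_const hδ,
    (tendsto_obstructionBound_floor_rpow (r := r) hγ
      (by rwa [Nat.cast_pred (by omega), Nat.cast_mul])
      (by rwa [Nat.cast_pred (by omega), Nat.cast_mul])).eventually_le_const hδ]
    with N hN hfloor hobstruction
  rw [pow_one, pow_one, mul_one_div, div_le_iff₀ hN] at hfloor
  exact ⟨by linarith, hobstruction⟩

lemma eventually_exists_sampleSize (hr : 2 ≤ r) (hε0 : 0 < ε) (hε1 : ε < 1) :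
    ∀ᶠ N : ℝ in atTop, ∃ m : ℕ, (m : ℝ) < N ∧ ∃ t : ℝ, 0 ≤ t ∧ ∀ a : ℝ, 0 ≤ a →
      a ≤ (1 - ε) * indepConst r * (N * Real.log N) ^ ((1 : ℝ) / r) →
        Real.exp t * (2 * a / (m + 1)) +
            vacancyRate r * 2 ^ r * (a ^ r / Nat.factorial r / (N - m)) <
          (1 + t) * (1 - obstructionBound r (m + 1) (1 / N)) := by
  have h3r := three_mul_sub_one_pos (r := r) (by omega)
  set b : ℝ := (1 - ε / 4) * (1 / (r * (3 * r - 1))) with hb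
  have hb0 : 0 ≤ b := mul_nonneg (by linarith) (by positivity)
  have hbγ : b + 1 / r < sampleExponent r ε := by
    rw [hb, sampleExponent, add_comm]
    gcongr
    linarith
  filter_upwards [eventually_ge_atTop 1,
    eventually_floor_rpow_sampleExponent_le hr hε0 (by linarith) (δ := ε / 4) (by positivity),
    (tendsto_exp_mul_rpow_div_rpow ((1 - ε) * indepConst r) hbγ).eventually_le_const
      (one_half_pos : (0 : ℝ) < 1 / 2)] with N hN ⟨hm, hobstruction⟩ hsmall
  have hlog := Real.log_nonneg hN
  have ht : 0 ≤ b * Real.log N := mul_nonneg hb0 hlog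
  refine ⟨⌊N ^ sampleExponent r ε⌋₊, by nlinarith, b * Real.log N, ht, fun a ha0 ha => ?_⟩
  have hvacancy : Real.exp (b * Real.log N) * (2 * a / (⌊N ^ sampleExponent r ε⌋₊ + 1)) ≤ 1 / 2 :=
    calc _ ≤ Real.exp (b * Real.log N) * (2 * a / N ^ sampleExponent r ε) := by
          gcongr
          exact (Nat.lt_floor_add_one _).le
      _ ≤ _ := by gcongr
      _ ≤ _ := hsmall
  calc _ ≤ 1 / 2 + (1 - ε) / (1 - ε / 4) * (Real.log N / (r * (3 * r - 1))) :=
        add_le_add hvacancy (vacancyRate_mul_pow_div_le (by omega) hε0.le hε1.le hN hm ha0 ha)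
    _ < (1 + (1 - ε / 4) * (Real.log N / (r * (3 * r - 1)))) * (1 - ε / 4) :=
        half_add_mul_lt hε0 hε1 (by positivity)
    _ = (1 + b * Real.log N) * (1 - ε / 4) := by
        rw [hb]
        ring
    _ ≤ _ := by gcongr

end Asymptotics

section IndependenceNumber

variable {V : Type*} [Fintype V] [DecidableEq V] {H : Finset (Finset V)} {r d m : ℕ} {t : ℝ}

lemma one_add_mul_one_sub_obstructionBound_le_of_lt_div (hH : (H : Set (Finset V)).Sized (r + 1))
    (hd : maxDegLe r H d) (hr : 2 ≤ r) (hd1 : 1 ≤ d) (hm : (m : ℝ) < Fintype.card V / d)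
    (ht : 0 ≤ t) :
    (1 + t) * (1 - obstructionBound r (m + 1) (1 / (Fintype.card V / d))) ≤
      Real.exp t * (2 * indepNum H / (m + 1)) + vacancyRate r * 2 ^ r *
        ((indepNum H : ℝ) ^ r / Nat.factorial r / (Fintype.card V / d - m)) := by
  have hd1' : (1 : ℝ) ≤ d := mod_cast hd1
  have hd0 : (0 : ℝ) < d := by linarith
  have hrate := vacancyRate_pos (r := r) (by omega)
  have hmn : m * (d : ℝ) < Fintype.card V := (lt_div_iff₀ hd0).1 hm
  have hmV : m < Fintype.card V := by
    exact_mod_cast (le_mul_of_one_le_right (Nat.cast_nonneg m) hd1').trans_lt hmn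
  have hmV' : (m : ℝ) < Fintype.card V := mod_cast hmV
  have hratio : (d : ℝ) / (Fintype.card V - m) ≤ 1 / (Fintype.card V / d - m) := by
    rw [div_le_div_iff₀ (sub_pos.2 hmV') (sub_pos.2 hm), mul_sub, mul_div_cancel₀ _ hd0.ne']
    nlinarith [Nat.cast_nonneg (α := ℝ) m]
  have hfinite := one_add_mul_one_sub_obstructionBound_le hH hd hr hmV ht
  rw [one_div_div]
  refine hfinite.trans ?_
  rw [mul_div_assoc (((indepNum H).choose r : ℕ) : ℝ), div_eq_mul_one_div _ (_ / _ - _)]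
  have : 0 ≤ (d : ℝ) / (Fintype.card V - m) := div_nonneg hd0.le (sub_nonneg.2 hmV'.le)
  gcongr
  exact Nat.choose_le_pow_div r _

end IndependenceNumber

lemma exists_forall_mul_le_of_le_div_log_pow {k : ℕ} (hk : k ≠ 0) (N₀ : ℝ) :
    ∃ n₀ : ℕ, ∀ n d : ℕ, n₀ ≤ n → (d : ℝ) ≤ n / Real.log n ^ k → N₀ * d ≤ n := by
  have hlog : Tendsto (fun n : ℕ => Real.log n ^ k) atTop atTop :=
    (tendsto_pow_atTop hk).comp (Real.tendsto_log_atTop.comp tendsto_natCast_atTop_atTop)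
  obtain ⟨n₀, hn₀⟩ := eventually_atTop.1 (hlog.eventually_ge_atTop (max N₀ 1))
  refine ⟨n₀, fun n d hn hd => ?_⟩
  have hmax := hn₀ n hn
  have hpos : 0 < Real.log n ^ k := zero_lt_one.trans_le ((le_max_right _ _).trans hmax)
  calc N₀ * d ≤ Real.log n ^ k * d := by
        gcongr
        exact (le_max_left _ _).trans hmax
    _ ≤ n := by rwa [le_div_iff₀' hpos] at hd

theorem stmt1_general (r : ℕ) (hr : 2 ≤ r) (ε : ℝ) (hε : 0 < ε) :
    ∃ N₀ : ℝ, ∀ n d : ℕ, 1 ≤ d → N₀ * d ≤ n →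
      ∀ (V : Type*) [Fintype V] [DecidableEq V], ∀ H : Finset (Finset V),
        Fintype.card V = n → (∀ e ∈ H, #e = r + 1) → maxDegLe r H d →
        (1 - ε) * indepConst r * (((n : ℝ) / d) * Real.log ((n : ℝ) / d)) ^ ((1 : ℝ) / r) ≤
          indepNum H := by
  set ε' := min ε (1 / 2)
  obtain ⟨N₀, hN₀⟩ := eventually_atTop.1 (eventually_exists_sampleSize hr
    (lt_min hε one_half_pos) ((min_le_right ε _).trans_lt one_half_lt_one))
  refine ⟨max N₀ 1, fun n d hd1 hn V _ _ H hV hH hd => ?_⟩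
  subst hV
  have hN : max N₀ 1 ≤ Fintype.card V / d := by rwa [le_div_iff₀ (mod_cast hd1)]
  obtain ⟨m, hm, t, ht, hlt⟩ := hN₀ _ ((le_max_left _ _).trans hN)
  have : (0 : ℝ) ≤ Fintype.card V / d := by positivity
  have hlog := Real.log_nonneg ((le_max_right _ _).trans hN)
  have hconst := indepConst_nonneg (r := r) (by omega)
  calc _ ≤ (1 - ε') * indepConst r *
          (Fintype.card V / d * Real.log (Fintype.card V / d)) ^ ((1 : ℝ) / r) := by
        gcongr
        exact min_le_left _ _
    _ ≤ indepNum H := le_of_not_ge fun hle =>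
        (hlt _ (Nat.cast_nonneg _) hle).not_ge
          (one_add_mul_one_sub_obstructionBound_le_of_lt_div (fun _ => hH _) hd hr hd1 hm ht)

/-- With the explicit constant
`c_r = (r! / (r·(3r−1)·2^r·(−log(1−2^{−r}))))^(1/r)`, for every `r ≥ 2` and `ε > 0`
there exists `n₀` such that for all `n ≥ n₀` and `1 ≤ d ≤ n/(log n)^(3r²)`, every
`(r+1)`-graph on `n` vertices with maximum `r`-degree at most `d` has
`α(H) ≥ (1−ε)·c_r·((n/d)·log(n/d))^(1/r)`. -/
theorem stmt1 (r : ℕ) (hr : 2 ≤ r) (ε : ℝ) (hε : 0 < ε) :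
    ∃ n₀ : ℕ, ∀ (n d : ℕ), n₀ ≤ n → 1 ≤ d →
      (d : ℝ) ≤ (n : ℝ) / (Real.log n) ^ (3 * r ^ 2) →
      ∀ (V : Type) [Fintype V] [DecidableEq V], ∀ (H : Finset (Finset V)),
        Fintype.card V = n →
        (∀ e ∈ H, e.card = r + 1) →
        maxDegLe r H d →
        (1 - ε) *
            ((Nat.factorial r : ℝ) /
              ((r : ℝ) * (3 * (r : ℝ) - 1) * 2 ^ r * (-Real.log (1 - 1 / 2 ^ r)))) ^ ((1 : ℝ) / r) *
            (((n : ℝ) / d) * Real.log ((n : ℝ) / d)) ^ ((1 : ℝ) / r)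
          ≤ (indepNum H : ℝ) := by
  obtain ⟨N₀, hN₀⟩ := stmt1_general r hr ε hε
  exact (exists_forall_mul_le_of_le_div_log_pow (by positivity) N₀).imp
    fun _ hn₀ n d hn hd1 hd => hN₀ n d hd1 (hn₀ n d hn hd)
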